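/- Fix n ≥ 1. For each i = 1, ..., m and j = 0, ..., n−1, the subspace 𝓛_{ij} (the closed linear span of {e_i z^{nk+j} : k ∈ ℕ}) is a minimal reducing subspace for T_{z^n} on H²_{ℂᵐ}(𝔻): 𝓛_{ij} is a nonzero reducing subspace for T_{z^n}, and every closed subspace N ⊆ 𝓛_{ij} that is a reducing subspace for T_{z^n} satisfies N = {0} or N = 𝓛_{ij}. -/

import Mathlib

noncomputable section

/-- The vector-valued Hardy space `H²_{ℂᵐ}(𝔻)`. -/
abbrev HardyVec (m : ℕ) : Type :=
  lp (fun _ : ℕ => EuclideanSpace ℂ (Fin m)) 2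

/-- The element `e_i z^p` of `H²_{ℂᵐ}(𝔻)`. -/
def eiz (m : ℕ) (i : Fin m) (p : ℕ) : HardyVec m :=
  lp.single 2 p (EuclideanSpace.single i (1 : ℂ))

/-- The subspace `𝓛_{ij}`: the closed linear span of `{e_i z^{nk+j} : k ∈ ℕ}`. -/
def Lsub (m n : ℕ) (i : Fin m) (j : Fin n) : Submodule ℂ (HardyVec m) :=
  (Submodule.span ℂ (Set.range fun k : ℕ => eiz m i (n * k + j))).topologicalClosure

/-!
`T_{z^n}` is an isometry, `e_i z^j` with `j < n` is killed by its adjoint, the backward shift, and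
`𝓛_{ij}` is the closed span of the orbit of `e_i z^j`. For any isometry `T` and any `w ≠ 0` with
`T† w = 0`, the closed span `L` of the orbit of `w` is a minimal reducing subspace. Indeed
`ker T† ∩ L` is the line through `w`. The projection `P` onto a reducing subspace `N ≤ L` commutes
with `T†`, so `P w` lies on that line: either `w ∈ N`, and then `L ≤ N`, or `P w = 0`, and then
`L ≤ Nᗮ`, which forces `N = ⊥`.
-/

open Submodule
open scoped InnerProduct

section Reducing

variable {𝕜 H : Type*} [RCLike 𝕜] [NormedAddCommGroup H] [InnerProductSpace 𝕜 H]

/-- `M` is a reducing subspace for `T`: a closed subspace such that both `M` and `Mᗮ` are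
invariant under `T`. -/
structure IsReducing (T : H →L[𝕜] H) (M : Submodule 𝕜 H) : Prop where
  isClosed : IsClosed (M : Set H)
  map_mem : ∀ x ∈ M, T x ∈ M
  map_mem_orthogonal : ∀ x ∈ Mᗮ, T x ∈ Mᗮ

/-- `M` is a minimal reducing subspace for `T`: it is nonzero and reducing, and the only reducing
subspaces it contains are `⊥` and `M` itself. -/
structure IsMinimalReducing (T : H →L[𝕜] H) (M : Submodule 𝕜 H) : Prop where
  ne_bot : M ≠ ⊥
  isReducing : IsReducing T M
  eq_bot_or_eq : ∀ N ≤ M, IsReducing T N → N = ⊥ ∨ N = M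

theorem IsReducing.starProjection_map {T : H →L[𝕜] H} {M : Submodule 𝕜 H}
    [M.HasOrthogonalProjection] (hM : IsReducing T M) (x : H) :
    M.starProjection (T x) = T (M.starProjection x) := by
  refine eq_starProjection_of_mem_orthogonal (hM.map_mem _ (starProjection_apply_mem _ _)) ?_
  rw [← map_sub]
  exact hM.map_mem_orthogonal _ (sub_starProjection_mem_orthogonal x)

variable [CompleteSpace H]

theorem isReducing_of_adjoint {T : H →L[𝕜] H} {M : Submodule 𝕜 H} (hM : IsClosed (M : Set H))
    (hT : ∀ x ∈ M, T x ∈ M) (hT' : ∀ x ∈ M, (T†) x ∈ M) : IsReducing T M where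
  isClosed := hM
  map_mem := hT
  map_mem_orthogonal := ContinuousLinearMap.orthogonal_mem_invtSubmodule hT'

theorem IsReducing.adjoint {T : H →L[𝕜] H} {M : Submodule 𝕜 H} (hM : IsReducing T M) :
    IsReducing (T†) M := by
  have : CompleteSpace M := hM.isClosed.completeSpace_coe
  refine isReducing_of_adjoint hM.isClosed ?_ ?_
  · exact ContinuousLinearMap.mem_invtSubmodule_adjoint_iff.2 hM.map_mem_orthogonal
  · rw [ContinuousLinearMap.adjoint_adjoint]
    exact hM.map_mem

end Reducing

section OrbitSpan

variable {R M : Type*} [Semiring R] [AddCommMonoid M] [Module R M] [TopologicalSpace M]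
  [ContinuousAdd M] [ContinuousConstSMul R M]

/-- The cyclic subspace generated by `w` under `T`: the closed linear span of the orbit
`w, T w, T² w, …`. -/
def closedOrbitSpan (T : M →L[R] M) (w : M) : Submodule R M :=
  (span R (Set.range fun k : ℕ => (T ^ k) w)).topologicalClosure

variable {T : M →L[R] M} {w : M}

theorem isClosed_closedOrbitSpan : IsClosed (closedOrbitSpan T w : Set M) :=
  isClosed_topologicalClosure _

theorem pow_apply_mem_closedOrbitSpan (k : ℕ) : (T ^ k) w ∈ closedOrbitSpan T w :=
  le_topologicalClosure _ (subset_span ⟨k, rfl⟩)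

theorem self_mem_closedOrbitSpan : w ∈ closedOrbitSpan T w :=
  pow_apply_mem_closedOrbitSpan 0

theorem closedOrbitSpan_le_iff {N : Submodule R M} (hN : IsClosed (N : Set M)) :
    closedOrbitSpan T w ≤ N ↔ ∀ k, (T ^ k) w ∈ N := by
  refine ⟨fun h k => h (pow_apply_mem_closedOrbitSpan k), fun h => ?_⟩
  exact topologicalClosure_minimal _ (span_le.2 (Set.range_subset_iff.2 h)) hN

theorem closedOrbitSpan_le_of_map_mem {N : Submodule R M} (hN : IsClosed (N : Set M))
    (hTN : ∀ x ∈ N, T x ∈ N) (hw : w ∈ N) : closedOrbitSpan T w ≤ N := by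
  refine (closedOrbitSpan_le_iff hN).2 fun k => ?_
  induction k with
  | zero => exact hw
  | succ k ih => simpa only [pow_succ', mul_apply_eq_comp] using hTN _ ih

theorem map_mem_closedOrbitSpan_of_forall_pow {S : M →L[R] M}
    (hS : ∀ k, S ((T ^ k) w) ∈ closedOrbitSpan T w) :
    ∀ x ∈ closedOrbitSpan T w, S x ∈ closedOrbitSpan T w :=
  (closedOrbitSpan_le_iff (N := (closedOrbitSpan T w).comap S.toLinearMap)
    (isClosed_closedOrbitSpan.preimage S.continuous)).2 hS

theorem map_mem_closedOrbitSpan : ∀ x ∈ closedOrbitSpan T w, T x ∈ closedOrbitSpan T w :=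
  map_mem_closedOrbitSpan_of_forall_pow fun k => by
    simpa only [pow_succ', mul_apply_eq_comp] using pow_apply_mem_closedOrbitSpan (k + 1)

end OrbitSpan

section OrbitSpanInner

variable {𝕜 H : Type*} [RCLike 𝕜] [NormedAddCommGroup H] [InnerProductSpace 𝕜 H]
  {T : H →L[𝕜] H} {w : H}

theorem mem_orthogonal_closedOrbitSpan_iff {x : H} :
    x ∈ (closedOrbitSpan T w)ᗮ ↔ ∀ k, inner 𝕜 ((T ^ k) w) x = 0 := by
  rw [← span_singleton_le_iff_mem, ← isOrtho_iff_le, isOrtho_comm, isOrtho_iff_le,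
    closedOrbitSpan_le_iff (isClosed_orthogonal _)]
  simp only [mem_orthogonal_singleton_iff_inner_left]

variable [CompleteSpace H]

theorem eq_zero_of_adjoint_eq_zero_of_inner_eq_zero {y : H} (hy : y ∈ closedOrbitSpan T w)
    (hTy : (T†) y = 0) (hwy : inner 𝕜 w y = 0) : y = 0 := by
  have hy' : y ∈ (closedOrbitSpan T w)ᗮ := by
    refine mem_orthogonal_closedOrbitSpan_iff.2 fun k => ?_
    cases k with
    | zero => exact hwy
    | succ k =>
      calc inner 𝕜 ((T ^ (k + 1)) w) y
        _ = inner 𝕜 (T ((T ^ k) w)) y := by rw [pow_succ', mul_apply_eq_comp]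
        _ = inner 𝕜 ((T ^ k) w) ((T†) y) := (T.adjoint_inner_right _ _).symm
        _ = 0 := by rw [hTy, inner_zero_right]
  exact inner_self_eq_zero.1 (inner_right_of_mem_orthogonal (𝕜 := 𝕜) hy hy')

theorem mem_span_singleton_of_adjoint_eq_zero (hw : (T†) w = 0) {u : H}
    (hu : u ∈ closedOrbitSpan T w) (hTu : (T†) u = 0) : u ∈ 𝕜 ∙ w := by
  obtain ⟨p, hp, y, hy, rfl⟩ := (𝕜 ∙ w).exists_add_mem_mem_orthogonal u
  have hpL : p ∈ closedOrbitSpan T w :=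
    (span_singleton_le_iff_mem _ _).2 self_mem_closedOrbitSpan hp
  have hTp : (T†) p = 0 := by
    obtain ⟨c, rfl⟩ := mem_span_singleton.1 hp
    rw [map_smul, hw, smul_zero]
  have hyL : y ∈ closedOrbitSpan T w := (Submodule.add_mem_iff_right _ hpL).1 hu
  have hTy : (T†) y = 0 := by rwa [map_add, hTp, zero_add] at hTu
  have hy0 : y = 0 := eq_zero_of_adjoint_eq_zero_of_inner_eq_zero hyL hTy
    (mem_orthogonal_singleton_iff_inner_right.1 hy)
  rwa [hy0, add_zero]

theorem IsReducing.eq_bot_or_eq_closedOrbitSpan (hw : (T†) w = 0) {N : Submodule 𝕜 H}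
    (hN : IsReducing T N) (hNL : N ≤ closedOrbitSpan T w) :
    N = ⊥ ∨ N = closedOrbitSpan T w := by
  have : CompleteSpace N := hN.isClosed.completeSpace_coe
  have hPw : (T†) (N.starProjection w) = 0 := by
    rw [← hN.adjoint.starProjection_map, hw, map_zero]
  obtain ⟨c, hc⟩ := mem_span_singleton.1 <|
    mem_span_singleton_of_adjoint_eq_zero hw (hNL (starProjection_apply_mem N w)) hPw
  by_cases hc0 : c = 0
  · left
    have hwN : w ∈ Nᗮ := by
      rwa [hc0, zero_smul, eq_comm, starProjection_apply_eq_zero_iff] at hc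
    have hLN : closedOrbitSpan T w ≤ Nᗮ :=
      closedOrbitSpan_le_of_map_mem (isClosed_orthogonal N) hN.map_mem_orthogonal hwN
    exact isOrtho_self.1 (hNL.trans hLN)
  · right
    have hwN : w ∈ N := (N.smul_mem_iff hc0).1 (hc ▸ starProjection_apply_mem N w)
    exact hNL.antisymm (closedOrbitSpan_le_of_map_mem hN.isClosed hN.map_mem hwN)

theorem isReducing_closedOrbitSpan_of_isometry (hT : Isometry T) (hw : (T†) w = 0) :
    IsReducing T (closedOrbitSpan T w) := by
  refine isReducing_of_adjoint isClosed_closedOrbitSpan map_mem_closedOrbitSpan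
    (map_mem_closedOrbitSpan_of_forall_pow fun k => ?_)
  cases k with
  | zero => exact hw ▸ zero_mem (closedOrbitSpan T w)
  | succ k =>
    have hadj : (T†) (T ((T ^ k) w)) = (T ^ k) w :=
      DFunLike.congr_fun (T.isometry_iff_adjoint_comp_self.1 hT) _
    rw [pow_succ', mul_apply_eq_comp, hadj]
    exact pow_apply_mem_closedOrbitSpan k

theorem isMinimalReducing_closedOrbitSpan_of_isometry (hT : Isometry T) (hw : (T†) w = 0)
    (hw0 : w ≠ 0) : IsMinimalReducing T (closedOrbitSpan T w) where
  ne_bot := (Submodule.ne_bot_iff _).2 ⟨w, self_mem_closedOrbitSpan, hw0⟩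
  isReducing := isReducing_closedOrbitSpan_of_isometry hT hw
  eq_bot_or_eq _ hNL hN := hN.eq_bot_or_eq_closedOrbitSpan hw hNL

end OrbitSpanInner

section ForwardShift

variable {𝕜 E : Type*} [RCLike 𝕜] [NormedAddCommGroup E] [InnerProductSpace 𝕜 E]

/-- `S` is the forward shift by `n` places on `ℓ²(ℕ, E)`, that is, the Toeplitz operator `T_{z^n}`
on the `E`-valued Hardy space. -/
def IsForwardShift (n : ℕ) (S : lp (fun _ : ℕ => E) 2 →L[𝕜] lp (fun _ : ℕ => E) 2) : Prop :=
  ∀ (F : lp (fun _ : ℕ => E) 2) (k : ℕ), S F k = if k < n then 0 else F (k - n)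

namespace IsForwardShift

variable {n : ℕ} {S : lp (fun _ : ℕ => E) 2 →L[𝕜] lp (fun _ : ℕ => E) 2}

theorem apply_add (hS : IsForwardShift n S) (F : lp (fun _ : ℕ => E) 2) (k : ℕ) :
    S F (k + n) = F k := by
  rw [hS, if_neg (by lia), Nat.add_sub_cancel]

theorem apply_single (hS : IsForwardShift n S) (p : ℕ) (v : E) :
    S (lp.single 2 p v) = lp.single 2 (p + n) v := by
  ext k
  rw [hS]
  simp only [lp.single_apply, Pi.single_apply]
  split_ifs <;> first | rfl | lia

theorem pow_apply_single (hS : IsForwardShift n S) (k p : ℕ) (v : E) :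
    (S ^ k) (lp.single 2 p v) = lp.single 2 (n * k + p) v := by
  induction k with
  | zero => simp
  | succ k ih =>
    rw [pow_succ', mul_apply_eq_comp, ih, hS.apply_single]
    congr 1
    ring

theorem closedOrbitSpan_single (hS : IsForwardShift n S) (p : ℕ) (v : E) :
    closedOrbitSpan S (lp.single 2 p v) =
      (span 𝕜 (Set.range fun k : ℕ => lp.single 2 (n * k + p) v)).topologicalClosure := by
  simp only [closedOrbitSpan, hS.pow_apply_single]

variable [CompleteSpace E]

theorem adjoint_apply (hS : IsForwardShift n S) (F : lp (fun _ : ℕ => E) 2) (k : ℕ) :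
    (S†) F k = F (k + n) := by
  refine ext_inner_left 𝕜 fun v : E => ?_
  calc inner 𝕜 v ((S†) F k) = inner 𝕜 (lp.single 2 k v) ((S†) F) :=
        (lp.inner_single_left k v ((S†) F)).symm
    _ = inner 𝕜 (lp.single 2 (k + n) v) F := by rw [S.adjoint_inner_right, hS.apply_single]
    _ = inner 𝕜 v (F (k + n)) := lp.inner_single_left (k + n) v F

theorem isometry (hS : IsForwardShift n S) : Isometry S := by
  rw [S.isometry_iff_adjoint_comp_self]
  ext F k
  exact (hS.adjoint_apply (S F) k).trans (hS.apply_add F k)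

theorem adjoint_single_eq_zero (hS : IsForwardShift n S) {p : ℕ} (hp : p < n) (v : E) :
    (S†) (lp.single 2 p v) = 0 := by
  ext k
  rw [hS.adjoint_apply, lp.single_apply_ne _ _ _ (by lia)]
  rfl

end IsForwardShift

theorem Lsub_minimal_reducing_general [CompleteSpace E] {n : ℕ}
    {S : lp (fun _ : ℕ => E) 2 →L[𝕜] lp (fun _ : ℕ => E) 2} (hS : IsForwardShift n S)
    {v : E} (hv : v ≠ 0) {j : ℕ} (hj : j < n) :
    IsMinimalReducing S
      (span 𝕜 (Set.range fun k : ℕ => lp.single 2 (n * k + j) v)).topologicalClosure := by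
  have hw0 : lp.single 2 j v ≠ (0 : lp (fun _ : ℕ => E) 2) := by
    rwa [← norm_ne_zero_iff, lp.norm_single two_pos, norm_ne_zero_iff]
  rw [← hS.closedOrbitSpan_single]
  exact isMinimalReducing_closedOrbitSpan_of_isometry hS.isometry
    (hS.adjoint_single_eq_zero hj v) hw0

end ForwardShift

/-- Each `𝓛_{ij}` is a minimal reducing subspace for `T_{z^n}` on `H²_{ℂᵐ}(𝔻)`: it is a nonzero
reducing subspace, and every closed subspace `N ⊆ 𝓛_{ij}` reducing for `T_{z^n}` is `{0}` or
`𝓛_{ij}`. -/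
theorem Lsub_minimal_reducing (m n : ℕ) (hm : 1 ≤ m) (hn : 1 ≤ n)
    (T : HardyVec m →L[ℂ] HardyVec m)
    (hT : ∀ (F : HardyVec m) (k : ℕ), T F k = if k < n then 0 else F (k - n))
    (i : Fin m) (j : Fin n) :
    Lsub m n i j ≠ ⊥ ∧
    (∀ x ∈ Lsub m n i j, T x ∈ Lsub m n i j) ∧
    (∀ x ∈ (Lsub m n i j)ᗮ, T x ∈ (Lsub m n i j)ᗮ) ∧
    (∀ N : Submodule ℂ (HardyVec m), IsClosed (N : Set (HardyVec m)) →
      N ≤ Lsub m n i j →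
      (∀ x ∈ N, T x ∈ N) → (∀ x ∈ Nᗮ, T x ∈ Nᗮ) →
      N = ⊥ ∨ N = Lsub m n i j) := by
  have h : IsMinimalReducing T (Lsub m n i j) :=
    Lsub_minimal_reducing_general hT (v := EuclideanSpace.single i 1) (by simp) j.isLt
  exact ⟨h.ne_bot, h.isReducing.map_mem, h.isReducing.map_mem_orthogonal,
    fun N hN hNL hTN hTN' => h.eq_bot_or_eq N hNL ⟨hN, hTN, hTN'⟩⟩
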